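/- Every connected weighted graph G on n vertices and every set 𝒫 ⊆ V × V of vertex pairs admits a subgraph H of G with at most C·n·|𝒫|^{1/3} edges (for a universal constant C) such that d_H(s,t) ≤ d_G(s,t) + 2·W(s,t) for every pair (s,t) ∈ 𝒫. -/

import Mathlib

open scoped ENNReal Classical

/-- The total weight of a walk: the sum of the weights of its edges. -/
noncomputable def walkWeight {V : Type} (G : SimpleGraph V) (w : Sym2 V → ℝ≥0∞)
    {s t : V} (p : G.Walk s t) : ℝ≥0∞ :=
  (p.edges.map w).sum

/-- Shortest-path distance in the weighted graph `(G, w)`, equal to `⊤` if there is no path. -/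
noncomputable def gdist {V : Type} (G : SimpleGraph V) (w : Sym2 V → ℝ≥0∞)
    (s t : V) : ℝ≥0∞ :=
  ⨅ p : G.Walk s t, walkWeight G w p

/-- The maximum edge weight along a walk (0 for the trivial walk). -/
noncomputable def maxEdge {V : Type} (G : SimpleGraph V) (w : Sym2 V → ℝ≥0∞)
    {s t : V} (p : G.Walk s t) : ℝ≥0∞ :=
  (p.edges.map w).foldr max 0

/-- `π` assigns to each ordered vertex pair a shortest path: a walk whose total
weight equals the shortest-path distance. -/
def IsShortestPathScheme {V : Type} (G : SimpleGraph V) (w : Sym2 V → ℝ≥0∞)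
    (π : (s t : V) → G.Walk s t) : Prop :=
  ∀ s t : V, walkWeight G w (π s t) = gdist G w s t

/-- The edge weights are positive and finite on all edges of `G`. -/
def PosWeights {V : Type} (G : SimpleGraph V) (w : Sym2 V → ℝ≥0∞) : Prop :=
  ∀ e ∈ G.edgeSet, 0 < w e ∧ w e ≠ ⊤

/-!
Put `n = |V|` and `x = |𝒫|^(1/3)`. Start from the subgraph `L` of all edges that are among the
(about) `x` lightest at one of their endpoints; it has at most `n x` edges. If a shortest `s`-`t`
walk misses `m` edges of `L`, then each missing edge has more than `x` neighbours at each endpoint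
that are no farther than the missing edge is long. Such a neighbour `u` is a hub: the detour through
`u` costs at most `2 W(s,t)`. One missing edge out of every three can be made to contribute a set
of hubs disjoint from the others, so there are at least `m x / 3` hubs.

Now serve the demands greedily. While `q` demands remain, either some remaining walk misses at most
`3 n / q^(2/3)` edges, and these are added; or every remaining demand has at least `n / q^(1/3)`
hubs, so some vertex is a hub of `q^(2/3)` demands, and a shortest-path tree rooted there serves all
of them. Either way the price per demand served is at most `3 n / q^(2/3)`, which sums to
`9 n |𝒫|^(1/3)`.
-/

section GreedyCovering

open scoped Finset

lemma cube_sub_cube_le {R : Type*} [CommRing R] [LinearOrder R] [IsStrictOrderedRing R] {x y : R}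
    (hy : 0 ≤ y) (hyx : y ≤ x) : x ^ 3 - y ^ 3 ≤ 3 * x ^ 2 * (x - y) := by
  have hfactor : x ^ 2 + x * y + y ^ 2 ≤ 3 * x ^ 2 := by nlinarith
  calc x ^ 3 - y ^ 3 = (x ^ 2 + x * y + y ^ 2) * (x - y) := by ring
    _ ≤ 3 * x ^ 2 * (x - y) := mul_le_mul_of_nonneg_right hfactor (sub_nonneg.2 hyx)

lemma rpow_one_third_pow_three {x : ℝ} (hx : 0 ≤ x) : (x ^ ((1 : ℝ) / 3)) ^ 3 = x := by
  rw [← Real.rpow_mul_natCast hx]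
  norm_num

-- The potential `3 * a * (#I) ^ (1/3)` pays for each step by concavity of the cube root.
lemma exists_cost_le_of_greedy {α ι : Type*} [SemilatticeSup α] [OrderBot α]
    {cost : α → ℝ} (cost_bot : cost ⊥ ≤ 0) (cost_sup : ∀ H K, cost (H ⊔ K) ≤ cost H + cost K)
    {Serves : α → ι → Prop} (serves_mono : Monotone Serves) {a : ℝ} (ha : 0 ≤ a) (I : Finset ι)
    (step : ∀ Q ⊆ I, Q.Nonempty → ∃ R ⊆ Q, R.Nonempty ∧ ∃ H,
      cost H * ((#Q : ℝ) ^ ((1 : ℝ) / 3)) ^ 2 ≤ a * #R ∧ ∀ i ∈ R, Serves H i) :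
    ∃ H, cost H ≤ 3 * a * (#I : ℝ) ^ ((1 : ℝ) / 3) ∧ ∀ i ∈ I, Serves H i := by
  induction I using Finset.strongInduction with
  | H I ih =>
  obtain rfl | hI := I.eq_empty_or_nonempty
  · exact ⟨⊥, by simpa using cost_bot, by simp⟩
  obtain ⟨R, hRI, hR, H, hcostH, hH⟩ := step I subset_rfl hI
  have hlt : I \ R ⊂ I := Finset.sdiff_ssubset hRI hR
  obtain ⟨K, hcostK, hK⟩ := ih (I \ R) hlt fun Q hQ => step Q (hQ.trans hlt.subset)
  refine ⟨H ⊔ K, ?_, fun i hi => ?_⟩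
  · set x := (#I : ℝ) ^ ((1 : ℝ) / 3)
    set y := (#(I \ R) : ℝ) ^ ((1 : ℝ) / 3)
    have hx : 0 < x := Real.rpow_pos_of_pos (by exact_mod_cast hI.card_pos) _
    have hy : 0 ≤ y := Real.rpow_nonneg (Nat.cast_nonneg _) _
    have hyx : y ≤ x := Real.rpow_le_rpow (Nat.cast_nonneg _)
      (by exact_mod_cast Finset.card_le_card hlt.subset) (by norm_num)
    have hcard : (#R : ℝ) = x ^ 3 - y ^ 3 := by
      rw [rpow_one_third_pow_three (Nat.cast_nonneg _),
        rpow_one_third_pow_three (Nat.cast_nonneg _), eq_sub_iff_add_eq']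
      exact_mod_cast Finset.card_sdiff_add_card_eq_card hRI
    have hpay : cost H ≤ 3 * a * (x - y) := by
      refine le_of_mul_le_mul_right ?_ (pow_pos hx 2)
      calc cost H * x ^ 2 ≤ a * #R := hcostH
        _ ≤ a * (3 * x ^ 2 * (x - y)) := by rw [hcard]; gcongr; exact cube_sub_cube_le hy hyx
        _ = 3 * a * (x - y) * x ^ 2 := by ring
    linarith [cost_sup H K]
  · by_cases hiR : i ∈ R
    · exact serves_mono le_sup_left i (hH i hiR)
    · exact serves_mono le_sup_right i (hK i (Finset.mem_sdiff.2 ⟨hi, hiR⟩))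

lemma exists_mul_card_le_card_filter {V ι : Type*} [Fintype V] [Nonempty V] (r : V → ι → Prop)
    [∀ u, DecidablePred (r u)] {Q : Finset ι} {c : ℝ}
    (h : ∀ i ∈ Q, c * Fintype.card V ≤ #{u | r u i}) :
    ∃ u, c * #Q ≤ #{i ∈ Q | r u i} := by
  have hdouble : ∑ u, #{i ∈ Q | r u i} = ∑ i ∈ Q, #{u | r u i} :=
    Finset.sum_card_bipartiteAbove_eq_sum_card_bipartiteBelow r
  have hsum : ∑ _u : V, c * #Q ≤ ∑ u, (#{i ∈ Q | r u i} : ℝ) :=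
    calc ∑ _u : V, c * #Q = ∑ _i ∈ Q, c * Fintype.card V := by simp; ring
      _ ≤ ∑ i ∈ Q, (#{u | r u i} : ℝ) := Finset.sum_le_sum h
      _ = ∑ u, (#{i ∈ Q | r u i} : ℝ) := by exact_mod_cast hdouble.symm
  obtain ⟨u, -, hu⟩ := Finset.exists_le_of_sum_le Finset.univ_nonempty hsum
  exact ⟨u, hu⟩

end GreedyCovering

section SeparatedIntervals

open scoped Finset

variable {ι α R : Type*} [Field R] [LinearOrder R] [IsStrictOrderedRing R]
  {φ : α → R} {X : Finset α} {k : ℕ}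

-- The shorter of the two intervals provides the points: its ball around the endpoint facing the
-- other interval does not leave the hull.
lemma le_card_filter_mem_hull {a b a' b' : R} (hba' : b ≤ a')
    (hb : k ≤ #{u ∈ X | |φ u - b| ≤ b - a}) (ha' : k ≤ #{u ∈ X | |φ u - a'| ≤ b' - a'}) :
    k ≤ #{u ∈ X | a ≤ φ u ∧ φ u ≤ b'} := by
  obtain hle | hle := le_total (b - a) (b' - a')
  · refine hb.trans (Finset.card_le_card (Finset.monotone_filter_right X fun u _ hu => ?_))
    have := abs_le.1 hu
    constructor <;> linarith
  · refine ha'.trans (Finset.card_le_card (Finset.monotone_filter_right X fun u _ hu => ?_))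
    have := abs_le.1 hu
    constructor <;> linarith

lemma le_card_filter_le {a b c : R} (hca : c ≤ a) (hb : k ≤ #{u ∈ X | |φ u - b| ≤ b - a}) :
    k ≤ #{u ∈ X | c ≤ φ u} :=
  hb.trans <| Finset.card_le_card <| Finset.monotone_filter_right X fun u _ hu => by
    linarith [abs_le.1 hu]

-- Two consecutive intervals give one block of `k` points; the third one only separates this block
-- from the next.
lemma mul_length_le_three_mul_card_filter {lo hi : ι → R} :
    ∀ {l : List ι}, l.Pairwise (fun i j => hi i ≤ lo j) → (∀ i ∈ l, lo i < hi i) →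
      (∀ i ∈ l, k ≤ #{u ∈ X | |φ u - lo i| ≤ hi i - lo i}) →
      (∀ i ∈ l, k ≤ #{u ∈ X | |φ u - hi i| ≤ hi i - lo i}) →
      ∀ {c : R}, (∀ i ∈ l, c ≤ lo i) → k * l.length ≤ 3 * #{u ∈ X | c ≤ φ u}
  | [], _, _, _, _, _, _ => by simp
  | [i], _, _, _, hhi, c, hc => by
    have := le_card_filter_le (hc i (by simp)) (hhi i (by simp))
    simp only [List.length_cons, List.length_nil]
    lia
  | [i, _], _, _, _, hhi, c, hc => by
    have := le_card_filter_le (hc i (by simp)) (hhi i (by simp))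
    simp only [List.length_cons, List.length_nil]
    lia
  | i :: j :: m :: l, hsep, hlt, hlo, hhi, c, hc => by
    simp only [List.pairwise_cons, List.forall_mem_cons] at hsep hlt hlo hhi hc
    obtain ⟨⟨hij, -⟩, ⟨hjm, -⟩, hml, hl⟩ := hsep
    have hblock := le_card_filter_mem_hull hij hhi.1 hlo.2.1
    have hrest := mul_length_le_three_mul_card_filter hl hlt.2.2.2 hlo.2.2.2 hhi.2.2.2 hml
    have hdisj : Disjoint {u ∈ X | lo i ≤ φ u ∧ φ u ≤ hi j} {u ∈ X | hi m ≤ φ u} :=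
      Finset.disjoint_filter.2 fun u _ hu hu' => by linarith
    have hunion := Finset.card_le_card (Finset.union_subset
      (Finset.monotone_filter_right X fun u _ (hu : lo i ≤ φ u ∧ φ u ≤ hi j) =>
        show c ≤ φ u by linarith)
      (Finset.monotone_filter_right X fun u _ (hu : hi m ≤ φ u) => show c ≤ φ u by linarith))
    rw [Finset.card_union_of_disjoint hdisj] at hunion
    simp only [List.length_cons]
    lia

end SeparatedIntervals

section Distance

variable {V : Type} {G H : SimpleGraph V} {w : Sym2 V → ℝ≥0∞} {s t r : V}

lemma walkWeight_cons (h : G.Adj s t) (p : G.Walk t r) :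
    walkWeight G w (.cons h p) = w s(s, t) + walkWeight G w p := by
  simp [walkWeight]

lemma walkWeight_append (p : G.Walk s t) (q : G.Walk t r) :
    walkWeight G w (p.append q) = walkWeight G w p + walkWeight G w q := by
  simp [walkWeight]

lemma walkWeight_ne_top (hw : ∀ e ∈ G.edgeSet, w e ≠ ⊤) (p : G.Walk s t) :
    walkWeight G w p ≠ ⊤ := by
  induction p with
  | nil => simp [walkWeight]
  | cons h p ih => exact walkWeight_cons h p ▸ ENNReal.add_ne_top.2 ⟨hw _ h, ih⟩

lemma weight_le_walkWeight {p : G.Walk s t} {e : Sym2 V} (he : e ∈ p.edges) :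
    w e ≤ walkWeight G w p :=
  List.single_le_sum (fun _ _ => zero_le) _ (List.mem_map_of_mem he)

lemma le_maxEdge {p : G.Walk s t} {e : Sym2 V} (he : e ∈ p.edges) : w e ≤ maxEdge G w p :=
  List.le_max_of_le' 0 (List.mem_map_of_mem he) le_rfl

lemma gdist_le_walkWeight (p : G.Walk s t) : gdist G w s t ≤ walkWeight G w p :=
  iInf_le _ p

lemma gdist_le_walkWeight_of_edges_subset (p : G.Walk s t) (h : ∀ e ∈ p.edges, e ∈ H.edgeSet) :
    gdist H w s t ≤ walkWeight G w p :=
  (gdist_le_walkWeight (p.transfer H h)).trans_eq (by simp [walkWeight])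

lemma gdist_anti (w : Sym2 V → ℝ≥0∞) (h : G ≤ H) (s t : V) : gdist H w s t ≤ gdist G w s t :=
  le_iInf fun p => gdist_le_walkWeight_of_edges_subset p fun _ he =>
    SimpleGraph.edgeSet_mono h (p.edges_subset_edgeSet he)

lemma gdist_self (s : V) : gdist G w s s = 0 :=
  nonpos_iff_eq_zero.1 ((gdist_le_walkWeight .nil).trans_eq (by simp [walkWeight]))

lemma gdist_comm (s t : V) : gdist G w s t = gdist G w t s := by
  have hle (s t : V) : gdist G w s t ≤ gdist G w t s :=
    le_iInf fun p => (gdist_le_walkWeight p.reverse).trans_eq (by simp [walkWeight])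
  exact (hle s t).antisymm (hle t s)

lemma gdist_triangle (s t r : V) : gdist G w s r ≤ gdist G w s t + gdist G w t r :=
  ENNReal.le_iInf_add_iInf fun p q =>
    (gdist_le_walkWeight (p.append q)).trans_eq (walkWeight_append p q)

lemma gdist_le_of_adj (h : G.Adj s t) : gdist G w s t ≤ w s(s, t) :=
  (gdist_le_walkWeight (.cons h .nil)).trans_eq (by simp [walkWeight])

lemma reachable_of_gdist_ne_top (h : gdist G w s t ≠ ⊤) : G.Reachable s t := by
  contrapose h
  have : IsEmpty (G.Walk s t) := not_nonempty_iff.1 h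
  exact iInf_of_empty _

lemma exists_walkWeight_eq_gdist [Finite V] (h : G.Reachable s t) :
    ∃ p : G.Walk s t, walkWeight G w p = gdist G w s t := by
  cases nonempty_fintype V
  obtain ⟨p₀⟩ := h
  have : Nonempty (G.Path s t) := ⟨p₀.toPath⟩
  obtain ⟨p, hp⟩ := Finite.exists_min fun p : G.Path s t => walkWeight G w p.1
  refine ⟨p, le_antisymm (le_iInf fun q => (hp q.toPath).trans ?_) (gdist_le_walkWeight _)⟩
  exact (q.edges_bypass_sublist_edges.map w).sum_le_sum fun _ _ => zero_le

lemma abs_toReal_gdist_sub_le {u z : V} {c : ℝ≥0∞} (hz : gdist G w s z ≠ ⊤) (hc : c ≠ ⊤)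
    (hzu : G.Adj z u) (hle : w s(z, u) ≤ c) :
    |(gdist G w s u).toReal - (gdist G w s z).toReal| ≤ c.toReal := by
  have hzu' : gdist G w z u ≤ c := (gdist_le_of_adj hzu).trans hle
  have hu : gdist G w s u ≤ gdist G w s z + c := (gdist_triangle s z u).trans (by gcongr)
  have hz' : gdist G w s z ≤ gdist G w s u + c :=
    (gdist_triangle s u z).trans (by rw [gdist_comm u z]; gcongr)
  have hu_top : gdist G w s u ≠ ⊤ := ne_top_of_le_ne_top (ENNReal.add_ne_top.2 ⟨hz, hc⟩) hu
  have hu_real := ENNReal.toReal_le_add hu hz hc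
  have hz_real := ENNReal.toReal_le_add hz' hu_top hc
  exact abs_sub_le_iff.2 ⟨by linarith, by linarith⟩

end Distance

section ShortestWalk

variable {V : Type} {G : SimpleGraph V} {w : Sym2 V → ℝ≥0∞} {s t : V} {p : G.Walk s t}

lemma gdist_add_weight_add_gdist_le_walkWeight {d : G.Dart} (hd : d ∈ p.darts) :
    gdist G w s d.fst + w d.edge + gdist G w d.snd t ≤ walkWeight G w p := by
  induction p with
  | nil => simp at hd
  | @cons s v t h p ih =>
    rw [walkWeight_cons]
    obtain rfl | hd := List.mem_cons.1 hd
    · rw [gdist_self, zero_add]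
      exact add_le_add_right (gdist_le_walkWeight p) _
    · calc gdist G w s d.fst + w d.edge + gdist G w d.snd t
          ≤ w s(s, v) + gdist G w v d.fst + w d.edge + gdist G w d.snd t := by
            gcongr
            exact (gdist_triangle s v d.fst).trans (by gcongr; exact gdist_le_of_adj h)
        _ = w s(s, v) + (gdist G w v d.fst + w d.edge + gdist G w d.snd t) := by ring
        _ ≤ w s(s, v) + walkWeight G w p := by gcongr; exact ih hd

lemma gdist_fst_add_gdist_le_walkWeight {d : G.Dart} (hd : d ∈ p.darts) :
    gdist G w s d.fst + gdist G w d.fst t ≤ walkWeight G w p :=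
  calc gdist G w s d.fst + gdist G w d.fst t
      ≤ gdist G w s d.fst + (w d.edge + gdist G w d.snd t) := by
        gcongr
        exact (gdist_triangle _ d.snd t).trans (by gcongr; exact gdist_le_of_adj d.adj)
    _ ≤ walkWeight G w p := by
        rw [← add_assoc]
        exact gdist_add_weight_add_gdist_le_walkWeight hd

lemma gdist_snd_add_gdist_le_walkWeight {d : G.Dart} (hd : d ∈ p.darts) :
    gdist G w s d.snd + gdist G w d.snd t ≤ walkWeight G w p :=
  calc gdist G w s d.snd + gdist G w d.snd t
      ≤ gdist G w s d.fst + w d.edge + gdist G w d.snd t := by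
        gcongr
        exact (gdist_triangle s d.fst _).trans (by gcongr; exact gdist_le_of_adj d.adj)
    _ ≤ walkWeight G w p := gdist_add_weight_add_gdist_le_walkWeight hd

lemma gdist_snd_eq_of_mem_darts (hp : walkWeight G w p = gdist G w s t)
    (hfin : walkWeight G w p ≠ ⊤) {d : G.Dart} (hd : d ∈ p.darts) :
    gdist G w s d.snd = gdist G w s d.fst + w d.edge := by
  have hthrough := gdist_add_weight_add_gdist_le_walkWeight (w := w) hd
  refine le_antisymm ((gdist_triangle s d.fst _).trans (by gcongr; exact gdist_le_of_adj d.adj)) ?_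
  refine (ENNReal.add_le_add_iff_right (ne_top_of_le_ne_top hfin (le_add_self.trans hthrough))).1 ?_
  exact hthrough.trans (hp.trans_le (gdist_triangle s d.snd t))

lemma le_fst_of_mem_darts {α : Type*} [Preorder α] {f : V → α}
    (hf : ∀ d ∈ p.darts, f d.fst ≤ f d.snd) {d : G.Dart} (hd : d ∈ p.darts) : f s ≤ f d.fst := by
  induction p with
  | nil => simp at hd
  | cons h p ih =>
    simp only [SimpleGraph.Walk.darts_cons, List.forall_mem_cons] at hf
    obtain rfl | hd := List.mem_cons.1 hd
    · exact le_rfl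
    · exact hf.1.trans (ih hf.2 hd)

lemma pairwise_darts_snd_le_fst {α : Type*} [Preorder α] {f : V → α}
    (hf : ∀ d ∈ p.darts, f d.fst ≤ f d.snd) :
    p.darts.Pairwise fun d d' => f d.snd ≤ f d'.fst := by
  induction p with
  | nil => simp
  | cons h p ih =>
    simp only [SimpleGraph.Walk.darts_cons, List.forall_mem_cons] at hf
    exact List.pairwise_cons.2 ⟨fun _ hd => le_fst_of_mem_darts hf.2 hd, ih hf.2⟩

end ShortestWalk

section Subgraphs

variable {V : Type} {G H : SimpleGraph V} {w : Sym2 V → ℝ≥0∞} {s t : V}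

lemma ncard_edgeSet_sup_le (G H : SimpleGraph V) :
    (G ⊔ H).edgeSet.ncard ≤ G.edgeSet.ncard + H.edgeSet.ncard := by
  rw [SimpleGraph.edgeSet_sup]
  exact Set.ncard_union_le _ _

lemma ncard_edgeSet_le_of_adj_imp_mem [Fintype V] {N : V → Finset V} {D : ℕ}
    (hN : ∀ v, (N v).card ≤ D) (h : ∀ u v, H.Adj u v → v ∈ N u ∨ u ∈ N v) :
    H.edgeSet.ncard ≤ Fintype.card V * D := by
  have hsub : H.edgeSet ⊆ (Finset.univ.biUnion fun v => (N v).image fun u => s(v, u) :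
      Finset (Sym2 V)) := by
    rintro ⟨u, v⟩ huv
    simp only [Finset.coe_biUnion, Set.mem_iUnion, Finset.coe_image, Set.mem_image]
    obtain hv | hu := h u v huv
    · exact ⟨u, by simp, v, hv, rfl⟩
    · exact ⟨v, by simp, u, hu, Sym2.eq_swap⟩
  calc H.edgeSet.ncard
      ≤ (Finset.univ.biUnion fun v => (N v).image fun u => s(v, u)).card :=
        (Set.ncard_le_ncard hsub (Finset.finite_toSet _)).trans_eq (Set.ncard_coe_finset _)
    _ ≤ Fintype.card V * D :=
        Finset.card_biUnion_le_card_mul _ _ _ fun v _ => Finset.card_image_le.trans (hN v)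

lemma exists_adj_weight_add_gdist_le_walkWeight (p : G.Walk s t) (hst : s ≠ t) :
    ∃ u, G.Adj s u ∧ w s(s, u) + gdist G w u t ≤ walkWeight G w p := by
  cases p with
  | nil => exact absurd rfl hst
  | @cons _ u _ hadj p =>
    refine ⟨u, hadj, ?_⟩
    rw [walkWeight_cons]
    gcongr
    exact gdist_le_walkWeight p

lemma exists_shortestPathTree [Fintype V] (hw : ∀ e ∈ G.edgeSet, 0 < w e) (r : V) :
    ∃ T ≤ G, T.edgeSet.ncard ≤ Fintype.card V ∧ ∀ v, gdist T w v r = gdist G w v r := by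
  have hstep (v : V) (hvr : v ≠ r) (hfin : gdist G w v r ≠ ⊤) :
      ∃ u, G.Adj v u ∧ w s(v, u) + gdist G w u r ≤ gdist G w v r := by
    obtain ⟨p, hp⟩ := exists_walkWeight_eq_gdist (reachable_of_gdist_ne_top hfin)
    exact hp ▸ exists_adj_weight_add_gdist_le_walkWeight p hvr
  choose! parent hadj hparent using hstep
  let T : SimpleGraph V := G ⊓ .fromRel fun v u => u = parent v
  refine ⟨T, inf_le_left, ?_, fun v => (gdist_anti w inf_le_left v r).antisymm' ?_⟩
  · refine (ncard_edgeSet_le_of_adj_imp_mem (N := fun v => {parent v}) (D := 1) (by simp)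
      fun u v huv => ?_).trans (mul_one _).le
    simpa using huv.2.2
  induction v using (Finite.wellFounded_of_trans_of_irrefl
    (InvImage (· < ·) fun v => gdist G w v r)).induction with
  | _ v ih =>
    by_cases hvr : v = r
    · simp [hvr, gdist_self]
    by_cases hfin : gdist G w v r = ⊤
    · simp [hfin]
    have hadj := hadj v hvr hfin
    have hparent := hparent v hvr hfin
    have hcloser : gdist G w (parent v) r < gdist G w v r :=
      (ENNReal.lt_add_right (ne_top_of_le_ne_top hfin (le_add_self.trans hparent))
        (hw _ hadj).ne').trans_le ((add_comm _ _).trans_le hparent)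
    calc gdist T w v r ≤ gdist T w v (parent v) + gdist T w (parent v) r := gdist_triangle _ _ _
      _ ≤ w s(v, parent v) + gdist G w (parent v) r := by
        gcongr
        · exact gdist_le_of_adj ⟨hadj, hadj.ne, Or.inl rfl⟩
        · exact ih _ hcloser
      _ ≤ gdist G w v r := hparent

end Subgraphs

section LightGraph

open scoped Finset

variable {V : Type} [Fintype V] {G : SimpleGraph V} {w : Sym2 V → ℝ≥0∞} {D : ℕ} {v y : V}

/-- The neighbours of `v` in `G` joined to `v` by an edge at most as heavy as `s(v, y)`. -/
noncomputable def lighterNeighbors (G : SimpleGraph V) (w : Sym2 V → ℝ≥0∞) (v y : V) : Finset V :=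
  {u | G.Adj v u ∧ w s(v, u) ≤ w s(v, y)}

lemma mem_lighterNeighbors {u : V} :
    u ∈ lighterNeighbors G w v y ↔ G.Adj v u ∧ w s(v, u) ≤ w s(v, y) := by
  simp [lighterNeighbors]

/-- The `D`-light subgraph of `G`: an edge is kept if, at one of its endpoints, at most `D` edges
(itself included) are at most as heavy. Ties count against an edge, so a vertex may keep fewer than
`D` edges even if its degree is larger. -/
noncomputable def lightGraph (G : SimpleGraph V) (w : Sym2 V → ℝ≥0∞) (D : ℕ) : SimpleGraph V where
  Adj u v := G.Adj u v ∧ (#(lighterNeighbors G w u v) ≤ D ∨ #(lighterNeighbors G w v u) ≤ D)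
  symm := ⟨fun _ _ h => ⟨h.1.symm, h.2.symm⟩⟩
  loopless := ⟨fun _ h => h.1.ne rfl⟩

lemma lightGraph_le : lightGraph G w D ≤ G := fun _ _ h => h.1

lemma card_filter_card_lighterNeighbors_le (v : V) :
    #{y | G.Adj v y ∧ #(lighterNeighbors G w v y) ≤ D} ≤ D := by
  obtain hempty | hne := Finset.eq_empty_or_nonempty
    {y | G.Adj v y ∧ #(lighterNeighbors G w v y) ≤ D}
  · simp [hempty]
  obtain ⟨y, hy, hmax⟩ := Finset.exists_max_image _ (fun y => w s(v, y)) hne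
  refine (Finset.card_le_card fun u hu => ?_).trans (Finset.mem_filter_univ y |>.1 hy).2
  exact mem_lighterNeighbors.2 ⟨(Finset.mem_filter_univ u |>.1 hu).1, hmax u hu⟩

lemma ncard_edgeSet_lightGraph_le : (lightGraph G w D).edgeSet.ncard ≤ Fintype.card V * D :=
  ncard_edgeSet_le_of_adj_imp_mem card_filter_card_lighterNeighbors_le fun u v h => by
    simp only [Finset.mem_filter_univ]
    exact h.2.imp (⟨h.1, ·⟩) (⟨h.1.symm, ·⟩)

lemma lt_card_lighterNeighbors_of_not_lightGraph_adj (h : G.Adj v y)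
    (hL : ¬ (lightGraph G w D).Adj v y) :
    D < #(lighterNeighbors G w v y) ∧ D < #(lighterNeighbors G w y v) := by
  simpa [lightGraph, h] using hL

end LightGraph

section MissingEdges

variable {V : Type} {G : SimpleGraph V} {w : Sym2 V → ℝ≥0∞} {s t : V}

/-- The steps of the walk `p`, in order, whose edges are absent from `L`. -/
noncomputable def missingDarts (L : SimpleGraph V) (p : G.Walk s t) : List G.Dart :=
  p.darts.filter fun d => ¬ L.Adj d.fst d.snd

/-- The graph formed by the edges of the walk `p` that are absent from `L`. -/
noncomputable def missingGraph (L : SimpleGraph V) (p : G.Walk s t) : SimpleGraph V :=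
  .fromEdgeSet ((missingDarts L p).map (·.edge)).toFinset

lemma mem_missingDarts {L : SimpleGraph V} {p : G.Walk s t} {d : G.Dart} :
    d ∈ missingDarts L p ↔ d ∈ p.darts ∧ ¬ L.Adj d.fst d.snd := by
  simp [missingDarts]

lemma missingGraph_le (L : SimpleGraph V) (p : G.Walk s t) : missingGraph L p ≤ G := by
  refine (SimpleGraph.fromEdgeSet_le G).2 fun e he => ?_
  obtain ⟨d, -, rfl⟩ := List.mem_map.1 (List.mem_toFinset.1 he.1)
  exact d.edge_mem

lemma ncard_edgeSet_missingGraph_le (L : SimpleGraph V) (p : G.Walk s t) :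
    (missingGraph L p).edgeSet.ncard ≤ (missingDarts L p).length := by
  rw [missingGraph, SimpleGraph.edgeSet_fromEdgeSet]
  calc _ ≤ ((missingDarts L p).map (·.edge)).toFinset.card :=
        (Set.ncard_le_ncard Set.sdiff_subset (Finset.finite_toSet _)).trans_eq
          (Set.ncard_coe_finset _)
    _ ≤ (missingDarts L p).length := (List.toFinset_card_le _).trans_eq (List.length_map _)

lemma gdist_sup_missingGraph_le (L : SimpleGraph V) (p : G.Walk s t) :
    gdist (L ⊔ missingGraph L p) w s t ≤ walkWeight G w p := by
  refine gdist_le_walkWeight_of_edges_subset p fun e he => ?_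
  obtain ⟨d, hd, rfl⟩ := List.mem_map.1 he
  by_cases hL : L.Adj d.fst d.snd
  · exact Or.inl hL
  · refine Or.inr ((SimpleGraph.fromEdgeSet_adj _).2 ⟨?_, d.adj.ne⟩)
    exact List.mem_toFinset.2 (List.mem_map_of_mem (mem_missingDarts.2 ⟨hd, hL⟩))

end MissingEdges

section Hubs

open scoped Finset

variable {V : Type} [Fintype V] {G T : SimpleGraph V} {w : Sym2 V → ℝ≥0∞} {s t u z : V}
  {p : G.Walk s t}

/-- The hubs of an `s`-`t` walk `p`: the vertices through which an `s`-`t` detour exceeds the weight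
of `p` by at most twice the maximum edge weight of `p`. -/
noncomputable def hubs (w : Sym2 V → ℝ≥0∞) (p : G.Walk s t) : Finset V :=
  {u | gdist G w s u + gdist G w u t ≤ walkWeight G w p + 2 * maxEdge G w p}

lemma mem_hubs :
    u ∈ hubs w p ↔ gdist G w s u + gdist G w u t ≤ walkWeight G w p + 2 * maxEdge G w p := by
  simp [hubs]

lemma mem_hubs_of_adj (hz : gdist G w s z + gdist G w z t ≤ walkWeight G w p) (hzu : G.Adj z u)
    (hle : w s(z, u) ≤ maxEdge G w p) : u ∈ hubs w p := by
  have hzu' : gdist G w z u ≤ maxEdge G w p := (gdist_le_of_adj hzu).trans hle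
  refine mem_hubs.2 ?_
  calc gdist G w s u + gdist G w u t
      ≤ (gdist G w s z + gdist G w z u) + (gdist G w u z + gdist G w z t) := by
        gcongr <;> exact gdist_triangle _ _ _
    _ = (gdist G w s z + gdist G w z t) + 2 * gdist G w z u := by rw [gdist_comm u z]; ring
    _ ≤ walkWeight G w p + 2 * maxEdge G w p := by gcongr

lemma gdist_le_of_mem_hubs (hu : u ∈ hubs w p) (hT : ∀ v, gdist T w v u = gdist G w v u) :
    gdist T w s t ≤ walkWeight G w p + 2 * maxEdge G w p :=
  calc gdist T w s t ≤ gdist T w s u + gdist T w u t := gdist_triangle _ _ _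
    _ = gdist G w s u + gdist G w u t := by rw [hT, gdist_comm u t, hT, gdist_comm t u]
    _ ≤ walkWeight G w p + 2 * maxEdge G w p := mem_hubs.1 hu

lemma lighterNeighbors_subset_filter_hubs {y : V} (he : s(z, y) ∈ p.edges)
    (hfin : walkWeight G w p ≠ ⊤) (hz : gdist G w s z + gdist G w z t ≤ walkWeight G w p) :
    lighterNeighbors G w z y ⊆
      {u ∈ hubs w p | |(gdist G w s u).toReal - (gdist G w s z).toReal| ≤ (w s(z, y)).toReal} := by
  intro u hu
  obtain ⟨hzu, hle⟩ := mem_lighterNeighbors.1 hu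
  exact Finset.mem_filter.2 ⟨mem_hubs_of_adj hz hzu (hle.trans (le_maxEdge he)),
    abs_toReal_gdist_sub_le (ne_top_of_le_ne_top hfin (le_self_add.trans hz))
      (ne_top_of_le_ne_top hfin (weight_le_walkWeight he)) hzu hle⟩

lemma mul_length_missingDarts_le_card_hubs (hw : ∀ e ∈ G.edgeSet, 0 < w e)
    (hp : walkWeight G w p = gdist G w s t) (hfin : walkWeight G w p ≠ ⊤) (D : ℕ) :
    (D + 1) * (missingDarts (lightGraph G w D) p).length ≤ 3 * #(hubs w p) := by
  set φ : V → ℝ := fun v => (gdist G w s v).toReal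
  have hstep {d : G.Dart} (hd : d ∈ p.darts) : φ d.snd - φ d.fst = (w d.edge).toReal := by
    have hfst := ne_top_of_le_ne_top hfin (le_self_add.trans (gdist_fst_add_gdist_le_walkWeight hd))
    have he := ne_top_of_le_ne_top hfin (weight_le_walkWeight (List.mem_map_of_mem hd))
    simp only [φ, gdist_snd_eq_of_mem_darts hp hfin hd, ENNReal.toReal_add hfst he,
      add_sub_cancel_left]
  have hlt {d : G.Dart} (hd : d ∈ p.darts) : φ d.fst < φ d.snd := by
    have he := ne_top_of_le_ne_top hfin (weight_le_walkWeight (List.mem_map_of_mem hd))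
    exact sub_pos.1 ((ENNReal.toReal_pos (hw _ d.edge_mem).ne' he).trans_eq (hstep hd).symm)
  have hsep : (missingDarts (lightGraph G w D) p).Pairwise fun d d' => φ d.snd ≤ φ d'.fst :=
    (pairwise_darts_snd_le_fst fun d hd => (hlt hd).le).filter _
  refine (mul_length_le_three_mul_card_filter (X := hubs w p) (φ := φ) (c := 0) hsep
    (fun d hd => hlt (mem_missingDarts.1 hd).1) (fun d hd => ?_) (fun d hd => ?_)
    fun d _ => ENNReal.toReal_nonneg).trans
      (Nat.mul_le_mul_left 3 (Finset.card_le_card (Finset.filter_subset _ _)))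
  · obtain ⟨hd, hL⟩ := mem_missingDarts.1 hd
    rw [hstep hd]
    exact (lt_card_lighterNeighbors_of_not_lightGraph_adj d.adj hL).1.trans_le <|
      Finset.card_le_card <| lighterNeighbors_subset_filter_hubs (List.mem_map_of_mem hd) hfin
        (gdist_fst_add_gdist_le_walkWeight hd)
  · obtain ⟨hd, hL⟩ := mem_missingDarts.1 hd
    have hedge : d.edge = s(d.snd, d.fst) := Sym2.eq_swap
    rw [hstep hd, hedge]
    exact (lt_card_lighterNeighbors_of_not_lightGraph_adj d.adj hL).2.trans_le <|
      Finset.card_le_card <| lighterNeighbors_subset_filter_hubs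
        (hedge ▸ List.mem_map_of_mem hd) hfin (gdist_snd_add_gdist_le_walkWeight hd)

end Hubs

section Spanner

open scoped Finset

variable {V : Type} [Fintype V] {G : SimpleGraph V} {w : Sym2 V → ℝ≥0∞}

lemma card_le_mul_card_hubs (hw : ∀ e ∈ G.edgeSet, 0 < w e) {s t : V} {p : G.Walk s t}
    (hp : walkWeight G w p = gdist G w s t) (hfin : walkWeight G w p ≠ ⊤) {D : ℕ} {x : ℝ}
    (hx : 0 ≤ x) (hxD : x ≤ D + 1)
    (hmany : 3 * Fintype.card V ≤ (missingDarts (lightGraph G w D) p).length * x ^ 2) :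
    Fintype.card V ≤ x * #(hubs w p) := by
  have hhubs : ((D + 1) * (missingDarts (lightGraph G w D) p).length : ℝ) ≤ 3 * #(hubs w p) := by
    exact_mod_cast mul_length_missingDarts_le_card_hubs hw hp hfin D
  have : 3 * (Fintype.card V : ℝ) ≤ 3 * (x * #(hubs w p)) :=
    calc 3 * (Fintype.card V : ℝ)
        ≤ (missingDarts (lightGraph G w D) p).length * x ^ 2 := hmany
      _ = x * (x * (missingDarts (lightGraph G w D) p).length) := by ring
      _ ≤ x * ((D + 1) * (missingDarts (lightGraph G w D) p).length) := by gcongr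
      _ ≤ x * (3 * #(hubs w p)) := by gcongr
      _ = 3 * (x * #(hubs w p)) := by ring
  linarith

lemma exists_cheap_augmentation (hw : PosWeights G w) {ι : Type*} {s t : ι → V}
    (p : ∀ i, G.Walk (s i) (t i)) (hp : ∀ i, walkWeight G w (p i) = gdist G w (s i) (t i))
    {Q : Finset ι} (hQ : Q.Nonempty) {D : ℕ} {x : ℝ} (hx : 0 < x) (hxQ : x ^ 3 = #Q)
    (hxD : x ≤ D + 1) :
    ∃ R ⊆ Q, R.Nonempty ∧ ∃ H ≤ G, H.edgeSet.ncard * x ^ 2 ≤ 3 * Fintype.card V * #R ∧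
      ∀ i ∈ R, gdist (lightGraph G w D ⊔ H) w (s i) (t i) ≤
        walkWeight G w (p i) + 2 * maxEdge G w (p i) := by
  by_cases hfew : ∃ i ∈ Q,
      (missingDarts (lightGraph G w D) (p i)).length * x ^ 2 ≤ 3 * Fintype.card V
  · obtain ⟨i, hi, hlength⟩ := hfew
    refine ⟨{i}, by simpa using hi, by simp, missingGraph (lightGraph G w D) (p i),
      missingGraph_le _ _, ?_, fun j hj => ?_⟩
    · rw [Finset.card_singleton, Nat.cast_one, mul_one]
      refine le_trans ?_ hlength
      gcongr
      exact ncard_edgeSet_missingGraph_le _ _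
    · obtain rfl := Finset.mem_singleton.1 hj
      exact (gdist_sup_missingGraph_le _ _).trans le_self_add
  · push Not at hfew
    have hhubs (i : ι) (hi : i ∈ Q) : x⁻¹ * Fintype.card V ≤ #{u | u ∈ hubs w (p i)} := by
      rw [Finset.filter_univ_mem, inv_mul_le_iff₀ hx]
      exact card_le_mul_card_hubs (fun e he => (hw e he).1) (hp i)
        (walkWeight_ne_top (fun e he => (hw e he).2) _) hx.le hxD (hfew i hi).le
    have : Nonempty V := hQ.elim fun i _ => ⟨s i⟩
    obtain ⟨u, hu⟩ := exists_mul_card_le_card_filter (fun u i => u ∈ hubs w (p i)) hhubs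
    have hpopular : x ^ 2 ≤ #{i ∈ Q | u ∈ hubs w (p i)} := by
      rwa [← hxQ, pow_succ' x 2, inv_mul_cancel_left₀ hx.ne'] at hu
    obtain ⟨T, hTG, hcardT, hT⟩ := exists_shortestPathTree (fun e he => (hw e he).1) u
    refine ⟨{i ∈ Q | u ∈ hubs w (p i)}, Finset.filter_subset _ _, Finset.card_pos.1 ?_, T, hTG, ?_,
      fun i hi => (gdist_anti w le_sup_right _ _).trans
        (gdist_le_of_mem_hubs (Finset.mem_filter.1 hi).2 hT)⟩
    · exact_mod_cast (pow_pos hx 2).trans_le hpopular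
    · calc (T.edgeSet.ncard : ℝ) * x ^ 2
          ≤ Fintype.card V * #{i ∈ Q | u ∈ hubs w (p i)} := by gcongr
        _ ≤ 3 * Fintype.card V * #{i ∈ Q | u ∈ hubs w (p i)} := by
          gcongr
          exact le_mul_of_one_le_left (Nat.cast_nonneg _) (by norm_num)

theorem pairwise_two_W_spanner_general (hw : PosWeights G w) {ι : Type*} [Finite ι] {s t : ι → V}
    (p : ∀ i, G.Walk (s i) (t i)) (hp : ∀ i, walkWeight G w (p i) = gdist G w (s i) (t i)) :
    ∃ H ≤ G, (H.edgeSet.ncard : ℝ) ≤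
        10 * (Fintype.card V : ℝ) * (Nat.card ι : ℝ) ^ ((1 : ℝ) / 3) ∧
      ∀ i, gdist H w (s i) (t i) ≤ gdist G w (s i) (t i) + 2 * maxEdge G w (p i) := by
  cases nonempty_fintype ι
  rw [Nat.card_eq_fintype_card]
  set n := Fintype.card V
  set x := (Fintype.card ι : ℝ) ^ ((1 : ℝ) / 3)
  set L := lightGraph G w ⌊x⌋₊
  obtain ⟨⟨H, hHG⟩, hcardH, hH⟩ := exists_cost_le_of_greedy
    (cost := fun H : Set.Iic G => (H.1.edgeSet.ncard : ℝ)) (by simp)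
    (fun H K => by exact_mod_cast ncard_edgeSet_sup_le H.1 K.1)
    (Serves := fun H i => gdist (L ⊔ H) w (s i) (t i) ≤
      walkWeight G w (p i) + 2 * maxEdge G w (p i))
    (fun H K hHK i => (gdist_anti w (sup_le_sup_left (show H.1 ≤ K.1 from hHK) L) _ _).trans)
    (a := 3 * n) (by positivity) Finset.univ fun Q _ hQ => by
      have hQx : (Q.card : ℝ) ^ ((1 : ℝ) / 3) ≤ x :=
        Real.rpow_le_rpow (Nat.cast_nonneg _) (by exact_mod_cast Q.card_le_univ) (by norm_num)
      obtain ⟨R, hRQ, hR, H, hHG, hcost, hserve⟩ := exists_cheap_augmentation hw p hp hQ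
        (Real.rpow_pos_of_pos (by exact_mod_cast hQ.card_pos) _)
        (rpow_one_third_pow_three (Nat.cast_nonneg _)) (hQx.trans (Nat.lt_floor_add_one x).le)
      exact ⟨R, hRQ, hR, ⟨H, hHG⟩, hcost, hserve⟩
  refine ⟨L ⊔ H, sup_le lightGraph_le hHG, ?_, fun i => hp i ▸ hH i (Finset.mem_univ i)⟩
  have hcardL : (L.edgeSet.ncard : ℝ) ≤ n * x :=
    calc (L.edgeSet.ncard : ℝ) ≤ n * ⌊x⌋₊ := by exact_mod_cast ncard_edgeSet_lightGraph_le
      _ ≤ n * x := by gcongr; exact Nat.floor_le (by positivity)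
  calc ((L ⊔ H).edgeSet.ncard : ℝ) ≤ L.edgeSet.ncard + H.edgeSet.ncard := by
        exact_mod_cast ncard_edgeSet_sup_le L H
    _ ≤ n * x + 3 * (3 * n) * x := add_le_add hcardL hcardH
    _ = 10 * n * x := by ring

end Spanner

/-- Every connected weighted graph `G` on `n` vertices and every set
`𝒫 ⊆ V × V` of vertex pairs admits a subgraph `H` of `G` on at most `C·n·|𝒫|^(1/3)` edges
(for a universal constant `C`) with `d_H(s,t) ≤ d_G(s,t) + 2·W(s,t)` for all `(s,t) ∈ 𝒫`. -/
theorem pairwise_two_W_spanner :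
    ∃ C : ℝ, 0 < C ∧
      ∀ (V : Type) [Fintype V] (G : SimpleGraph V) (w : Sym2 V → ℝ≥0∞),
        G.Connected → PosWeights G w →
        ∀ π : (s t : V) → G.Walk s t, IsShortestPathScheme G w π →
          ∀ P : Set (V × V),
            ∃ H : SimpleGraph V, H ≤ G ∧
              (H.edgeSet.ncard : ℝ) ≤
                C * (Fintype.card V : ℝ) * (P.ncard : ℝ) ^ ((1 : ℝ) / 3) ∧
              ∀ s t : V, (s, t) ∈ P →
                gdist H w s t ≤ gdist G w s t + 2 * maxEdge G w (π s t) := by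
  refine ⟨10, by norm_num, fun V _ G w _ hw π hπ P => ?_⟩
  obtain ⟨H, hHG, hcard, hH⟩ := pairwise_two_W_spanner_general hw
    (fun q : P => π q.1.1 q.1.2) fun q => hπ q.1.1 q.1.2
  exact ⟨H, hHG, hcard, fun s t hst => hH ⟨(s, t), hst⟩⟩
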